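/- arXiv:2109.09043 — 4 statements merged into one kernel-verified Lean document; each statement's English description precedes it below -/
import Mathlib

section
/- For all real numbers a, b and all σ > 0, the Gaussian smoothing identity ∫_ℝ Φ((a − b·x)/σ) · φ(x) dx = Φ(a/√(σ² + b²)) holds, where the integral is with respect to Lebesgue measure on ℝ. -/
/-!
Let `X`, `Z` be independent standard normal variables. Conditionally on `X = x`, the event
`b X + σ Z ≤ a` has probability `Φ((a - b x) / σ)`, so the integral is `P(b X + σ Z ≤ a)`.
Since `b X + σ Z` is centred normal with variance `b² + σ²`, this equals `Φ(a / √(σ² + b²))`.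
In terms of measures: `stdNormalCDF_div` rewrites `Φ(t / s)` as the mass that `N(0, s²)` gives
to `(-∞, t]`, and the conclusion is the evaluation of the convolution identity
`N(0, b²) ∗ N(0, σ²) = N(0, b² + σ²)` on `(-∞, a]`.
-/

open MeasureTheory ProbabilityTheory

/-- The cumulative distribution function `Φ` of the standard normal distribution. -/
noncomputable def stdNormalCDF (x : ℝ) : ℝ :=
  ((gaussianReal 0 1) (Set.Iic x)).toReal

/-- The density `φ` of the standard normal distribution. -/
noncomputable def stdNormalPDF (x : ℝ) : ℝ :=
  Real.exp (-x ^ 2 / 2) / Real.sqrt (2 * Real.pi)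

open scoped NNReal

lemma stdNormalPDF_eq (x : ℝ) : stdNormalPDF x = gaussianPDFReal 0 1 x := by
  simp [stdNormalPDF, gaussianPDFReal, div_eq_inv_mul]

lemma gaussianReal_eq_map (s : ℝ) (v : ℝ≥0) (hv : (v : ℝ) = s ^ 2) :
    gaussianReal 0 v = (gaussianReal 0 1).map (s * ·) := by
  rw [gaussianReal_map_const_mul]
  congr 1
  · simp
  · ext; simp [hv]

/-- If `Z` is standard normal and `s > 0`, then `Z ≤ t / s` iff `s Z ≤ t`, where
`s Z` has law `N(0, s²)`. -/
lemma stdNormalCDF_div (t s : ℝ) (hs : 0 < s) (v : ℝ≥0) (hv : (v : ℝ) = s ^ 2) :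
    stdNormalCDF (t / s) = (gaussianReal 0 v (Set.Iic t)).toReal := by
  rw [gaussianReal_eq_map s v hv, Measure.map_apply (by fun_prop) measurableSet_Iic, stdNormalCDF]
  congr 2
  ext x
  simp [le_div_iff₀' hs]

/-- Gaussian smoothing identity: for all `a b : ℝ` and `σ > 0`,
`∫ Φ((a − b·x)/σ) φ(x) dx = Φ(a/√(σ² + b²))`. -/
theorem gaussian_smoothing_identity (a b σ : ℝ) (hσ : 0 < σ) :
    ∫ x : ℝ, stdNormalCDF ((a - b * x) / σ) * stdNormalPDF x =
      stdNormalCDF (a / Real.sqrt (σ ^ 2 + b ^ 2)) := by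
  let v : ℝ≥0 := ⟨σ ^ 2, sq_nonneg σ⟩
  let w : ℝ≥0 := ⟨b ^ 2, sq_nonneg b⟩
  have hpos : 0 < σ ^ 2 + b ^ 2 := by positivity
  have hmeas : Measurable fun y : ℝ ↦ gaussianReal 0 v (Set.Iic (a - y)) :=
    Antitone.measurable fun x y hxy ↦
      measure_mono (Set.Iic_subset_Iic.mpr (by linarith))
  -- The convolution identity, evaluated on `(-∞, a]` and pulled back along `x ↦ b * x`.
  have hconv : gaussianReal 0 (w + v) (Set.Iic a) =
      ∫⁻ x, gaussianReal 0 v (Set.Iic (a - b * x)) ∂(gaussianReal 0 1) := by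
    have h := gaussianReal_conv_gaussianReal (m₁ := 0) (m₂ := 0) (v₁ := w) (v₂ := v)
    rw [add_zero] at h
    rw [← h, Measure.conv, Measure.map_apply (by fun_prop) measurableSet_Iic,
      Measure.prod_apply (measurableSet_Iic.preimage (by fun_prop))]
    have hset : ∀ y : ℝ, Prod.mk y ⁻¹' ((fun p : ℝ × ℝ ↦ p.1 + p.2) ⁻¹' Set.Iic a)
        = Set.Iic (a - y) := by
      intro y
      ext z
      simp [le_sub_iff_add_le']
    simp_rw [hset]
    rw [gaussianReal_eq_map b w rfl, lintegral_map hmeas (by fun_prop)]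
  rw [stdNormalCDF_div a _ (Real.sqrt_pos.mpr hpos) (w + v)
    (by rw [Real.sq_sqrt hpos.le, add_comm]; rfl), hconv,
    ← integral_toReal (f := fun x ↦ gaussianReal 0 v (Set.Iic (a - b * x)))
      (hmeas.comp (measurable_const_mul b)).aemeasurable
      (Filter.Eventually.of_forall fun x ↦ measure_lt_top _ _),
    integral_gaussianReal_eq_integral_smul one_ne_zero]
  refine integral_congr_ae (Filter.Eventually.of_forall fun x ↦ ?_)
  simp only [smul_eq_mul]
  rw [stdNormalCDF_div _ σ hσ v rfl, stdNormalPDF_eq, mul_comm]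
end

section
/- (Identification under CL(1).) Fix an integer K ≥ 3. Let (c₂,…,c_K, δ₁,…,δ_K, γ₁,…,γ_K) and (c'₂,…,c'_K, δ'₁,…,δ'_K, γ'₁,…,γ'_K) be two parameter vectors with γ_l > 0 and γ'_l > 0 for all l ∈ {1,…,K}, with strictly increasing thresholds c₂ < c₃ < ⋯ < c_K, and satisfying the identifying constraints c₂ = c'₂ = 0 and γ₁ = γ'₁ = 1. If the identifying functions agree, i.e. (c_k − δ_l)/γ_l = (c'_k − δ'_l)/γ'_l for all k ∈ {2,…,K} and all l ∈ {1,…,K}, then the two parameter vectors are equal: c_k = c'_k for all k ∈ {2,…,K}, δ_l = δ'_l and γ_l = γ'_l for all l ∈ {1,…,K}. -/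
/-!
The identifying functions are affine in `c_k`, with slope `1 / γ_l`. For `l = 1` the slope is `1`
and `c₂ = 0` fixes the offset, so the thresholds are determined. Knowing two distinct thresholds
`c₂ = 0 < c₃` then determines slope and offset, hence `γ_l` and `δ_l`, for every other `l`.
-/

/-- **Identification under CL(1).** Under the normalization `c₂ = 0`,
`γ₁ = 1`, the identifying functions `(k, l) ↦ (c_k − δ_l)/γ_l` determine the thresholds
`c₂, …, c_K`, the intercepts `δ₁, …, δ_K` and the volatilities `γ₁, …, γ_K`. -/
theorem cl1_identification
    (K : ℕ) (hK : 3 ≤ K)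
    (c δ γ c' δ' γ' : ℕ → ℝ)
    (hγ : ∀ l, 1 ≤ l → l ≤ K → 0 < γ l)
    (hγ' : ∀ l, 1 ≤ l → l ≤ K → 0 < γ' l)
    (hcmono : ∀ k, 2 ≤ k → k < K → c k < c (k + 1))
    (hc2 : c 2 = 0) (hc2' : c' 2 = 0)
    (hγ1 : γ 1 = 1) (hγ1' : γ' 1 = 1)
    (hagree : ∀ k l, 2 ≤ k → k ≤ K → 1 ≤ l → l ≤ K →
      (c k - δ l) / γ l = (c' k - δ' l) / γ' l) :
    (∀ k, 2 ≤ k → k ≤ K → c k = c' k) ∧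
      (∀ l, 1 ≤ l → l ≤ K → δ l = δ' l) ∧
      (∀ l, 1 ≤ l → l ≤ K → γ l = γ' l) := by
  -- The row `l = 1`, where both volatilities are `1`, determines all thresholds.
  have hc : ∀ k, 2 ≤ k → k ≤ K → c k = c' k := by
    intro k hk hkK
    have h2 := hagree 2 1 le_rfl (by omega) le_rfl (by omega)
    have h := hagree k 1 hk hkK le_rfl (by omega)
    rw [hγ1, hγ1', div_one, div_one] at h h2
    linarith
  have hc3 : 0 < c 3 := hc2 ▸ hcmono 2 le_rfl (by omega)
  -- Subtracting the equations for `k = 3` and `k = 2` gives `c₃ / γ_l = c₃ / γ'_l`, with `c₃ > 0`.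
  have hγγ : ∀ l, 1 ≤ l → l ≤ K → γ l = γ' l := by
    intro l hl hlK
    have h2 := hagree 2 l le_rfl (by omega) hl hlK
    have h3 := hagree 3 l (by omega) hK hl hlK
    rw [hc2, hc2', sub_div, sub_div] at h2
    rw [← hc 3 (by omega) hK, sub_div, sub_div] at h3
    have h : c 3 / γ l = c 3 / γ' l := by
      simp only [zero_div] at h2
      linarith
    have hp := hγ l hl hlK
    have hp' := hγ' l hl hlK
    rw [div_eq_div_iff hp.ne' hp'.ne'] at h
    exact (mul_left_cancel₀ hc3.ne' h).symm
  refine ⟨hc, fun l hl hlK => ?_, hγγ⟩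
  have h2 := hagree 2 l le_rfl (by omega) hl hlK
  rw [hc2, hc2', ← hγγ l hl hlK, div_left_inj' (hγ l hl hlK).ne'] at h2
  linarith
end

section
/- (Identification under CL(2).) Fix an integer K ≥ 3. Let (c₂,…,c_K, δ₁,…,δ_K, β₁,…,β_K, σ₁,…,σ_K, ρ) and (c'₂,…,c'_K, δ'₁,…,δ'_K, β'₁,…,β'_K, σ'₁,…,σ'_K, ρ') be two parameter vectors with σ_l > 0, σ'_l > 0 for all l, |ρ| < 1, |ρ'| < 1, strictly increasing thresholds c₂ < c₃ < ⋯ < c_K, and β₁ > 0, β'₁ > 0. Define γ_l = √(σ_l² + β_l²·(1−ρ²)) and γ'_l = √(σ'_l² + β'_l²·(1−ρ'²)), and impose the identifying constraints c₂ = c'₂ = 0 and γ₁ = γ'₁ = 1. Suppose there exists ε ∈ {−1, 1} such that for all k ∈ {2,…,K} and all l ∈ {1,…,K}: (c_k − δ_l)/γ_l = (c'_k − δ'_l)/γ'_l, (c_k − δ_l)/σ_l = (c'_k − δ'_l)/σ'_l, β_l·ρ/γ_l = ε·β'_l·ρ'/γ'_l, and β_l/σ_l = ε·β'_l/σ'_l.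 Then the two parameter vectors are equal: c_k = c'_k for all k ∈ {2,…,K}, δ_l = δ'_l, β_l = β'_l, σ_l = σ'_l for all l ∈ {1,…,K}, and ρ = ρ'. -/
/-!
The argument compares the two parameter vectors through category `1` and the gap `c₃ - c₂`.
Positivity of `β₁/σ₁` and `β'₁/σ'₁` rules out `ε = -1`. Since `γ₁ = γ'₁ = 1` and
`c₂ = c'₂ = 0`, the first family at `l = 1` gives `δ₁ = δ'₁`, hence `c_k = c'_k` for all `k`.
Subtracting the second family at `k = 2` from that at `k = 3` cancels `δ_l` and leaves
`c₃/σ_l = c₃/σ'_l` with `c₃ > 0`, so `σ_l = σ'_l`; then `δ_l = δ'_l` and `β_l = β'_l` follow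
by clearing the common denominator. Finally `ρ` is read off from `β₁ρ/γ₁` with `β₁ ≠ 0`.
-/

/-- **Identification under CL(2).** Under the normalization `c₂ = 0`,
`γ₁ = 1` (with `γ_l = √(σ_l² + β_l²(1−ρ²))`) and the sign restriction `β₁ > 0`, the
identifying functions `(c_k − δ_l)/γ_l`, `(c_k − δ_l)/σ_l`, `ε·β_l·ρ/γ_l`, `ε·β_l/σ_l`
of the CL(2) composite likelihood determine all parameters of the stochastic factor
ordered Probit migration model. -/
theorem cl2_identification
    (K : ℕ) (hK : 3 ≤ K)
    (c δ β σ : ℕ → ℝ) (ρ : ℝ)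
    (c' δ' β' σ' : ℕ → ℝ) (ρ' : ℝ)
    (hσ : ∀ l, 1 ≤ l → l ≤ K → 0 < σ l)
    (hσ' : ∀ l, 1 ≤ l → l ≤ K → 0 < σ' l)
    (hρ : |ρ| < 1) (hρ' : |ρ'| < 1)
    (hcmono : ∀ k, 2 ≤ k → k < K → c k < c (k + 1))
    (hβ1 : 0 < β 1) (hβ1' : 0 < β' 1)
    (γ γ' : ℕ → ℝ)
    (hγ : ∀ l, γ l = Real.sqrt (σ l ^ 2 + β l ^ 2 * (1 - ρ ^ 2)))
    (hγ' : ∀ l, γ' l = Real.sqrt (σ' l ^ 2 + β' l ^ 2 * (1 - ρ' ^ 2)))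
    (hc2 : c 2 = 0) (hc2' : c' 2 = 0)
    (hγ1 : γ 1 = 1) (hγ1' : γ' 1 = 1)
    (ε : ℝ) (hε : ε = -1 ∨ ε = 1)
    (hagree1 : ∀ k l, 2 ≤ k → k ≤ K → 1 ≤ l → l ≤ K →
      (c k - δ l) / γ l = (c' k - δ' l) / γ' l)
    (hagree2 : ∀ k l, 2 ≤ k → k ≤ K → 1 ≤ l → l ≤ K →
      (c k - δ l) / σ l = (c' k - δ' l) / σ' l)
    (hagree3 : ∀ l, 1 ≤ l → l ≤ K →
      β l * ρ / γ l = ε * (β' l * ρ' / γ' l))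
    (hagree4 : ∀ l, 1 ≤ l → l ≤ K →
      β l / σ l = ε * (β' l / σ' l)) :
    (∀ k, 2 ≤ k → k ≤ K → c k = c' k) ∧
      (∀ l, 1 ≤ l → l ≤ K → δ l = δ' l) ∧
      (∀ l, 1 ≤ l → l ≤ K → β l = β' l) ∧
      (∀ l, 1 ≤ l → l ≤ K → σ l = σ' l) ∧
      ρ = ρ' := by
  have h1K : 1 ≤ K := by omega
  have hε1 : ε = 1 := by
    rcases hε with h | h
    · exfalso
      have h4 := hagree4 1 le_rfl h1K
      have hpos := div_pos hβ1 (hσ 1 le_rfl h1K)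
      have hpos' := div_pos hβ1' (hσ' 1 le_rfl h1K)
      rw [h] at h4
      linarith
    · exact h
  subst hε1
  have hδ1 : δ 1 = δ' 1 := by
    have h := hagree1 2 1 le_rfl (by omega) le_rfl h1K
    rw [hγ1, hγ1', hc2, hc2'] at h
    linarith
  have hc : ∀ k, 2 ≤ k → k ≤ K → c k = c' k := by
    intro k hk hkK
    have h := hagree1 k 1 hk hkK le_rfl h1K
    rw [hγ1, hγ1', hδ1] at h
    linarith
  have hc3 : 0 < c 3 := by
    have h := hcmono 2 le_rfl (by omega)
    rwa [hc2] at h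
  have hσeq : ∀ l, 1 ≤ l → l ≤ K → σ l = σ' l := by
    intro l hl hlK
    have h2 := hagree2 2 l le_rfl (by omega) hl hlK
    have h3 := hagree2 3 l (by omega) hK hl hlK
    rw [hc2, hc2'] at h2
    rw [← hc 3 (by omega) hK] at h3
    have h : c 3 / σ l = c 3 / σ' l := by
      simp only [sub_div, zero_div] at h2 h3
      linarith
    rw [div_eq_mul_inv, div_eq_mul_inv] at h
    exact inv_injective (mul_left_cancel₀ hc3.ne' h)
  have hβeq : ∀ l, 1 ≤ l → l ≤ K → β l = β' l := by
    intro l hl hlK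
    have h := hagree4 l hl hlK
    rw [one_mul, hσeq l hl hlK] at h
    exact (div_left_inj' (hσ' l hl hlK).ne').mp h
  refine ⟨hc, ?_, hβeq, hσeq, ?_⟩
  · intro l hl hlK
    have h := hagree2 2 l le_rfl (by omega) hl hlK
    rw [hc2, hc2', hσeq l hl hlK] at h
    have h' := (div_left_inj' (hσ' l hl hlK).ne').mp h
    linarith
  · have h := hagree3 1 le_rfl h1K
    rw [hγ1, hγ1', one_mul, div_one, div_one, hβeq 1 le_rfl h1K] at h
    exact mul_left_cancel₀ hβ1'.ne' h
end

section
/- Fix an integer K ≥ 3. For a parameter vector θ = (c₂,…,c_K, δ₁,…,δ_K, γ₁,…,γ_K) with strictly increasing thresholds c₂ < ⋯ < c_K and γ_l > 0 for all l, define the one-step transition probabilities p_{kl}(θ) = Φ((c_{k+1} − δ_l)/γ_l) − Φ((c_k − δ_l)/γ_l) for k, l ∈ {1,…,K}, with the conventions c₁ = −∞, c_{K+1} = +∞, Φ(−∞) = 0, Φ(+∞) = 1. Let Θ* be the set of such parameter vectors satisfying the normalization c₂ = 0 and γ₁ = 1, let θ₀ ∈ Θ*, and let w₁,…,w_K > 0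 be strictly positive weights. Define the limiting composite log-likelihood L(θ) = Σ_{l=1}^{K} w_l · Σ_{k=1}^{K} p_{kl}(θ₀) · log p_{kl}(θ). Then θ₀ is the unique maximizer of L over Θ*: L(θ) ≤ L(θ₀) for all θ ∈ Θ*, with equality only if θ = θ₀. -/
/-!
For each column `l`, both `k ↦ p_{kl}(θ₀)` and `k ↦ p_{kl}(θ)` are strictly positive and sum to one,
so Gibbs' inequality (`gibbs_le`) bounds each column of `L(θ)` by that of `L(θ₀)`. As the weights
are positive, equality of the totals forces equality in every column, hence equality of all the
transition probabilities (`gibbs_eq`).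

Partial sums over `k` then recover the values `Φ((c_k − δ_l)/γ_l)`, and strict monotonicity of `Φ`
recovers the standardized thresholds `(c_k − δ_l)/γ_l` themselves. In column `l = 1`, where
`γ₁ = 1` and `c₂ = 0`, the threshold `k = 2` gives `δ₁`, and then every `c_k` follows. In any other
column, the two distinct known thresholds `c₂ < c₃` determine the affine map `x ↦ (x − δ_l)/γ_l`,
hence `δ_l` and `γ_l`; this is where `K ≥ 3` enters.
-/

open MeasureTheory ProbabilityTheory

/-- `Φ((c_k − δ_l)/γ_l)` with the conventions `c₁ = −∞` (value `0`) and
`c_{K+1} = +∞` (value `1`). -/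
noncomputable def cl1G (K : ℕ) (c δ γ : ℕ → ℝ) (k l : ℕ) : ℝ :=
  if k ≤ 1 then 0 else if K + 1 ≤ k then 1 else stdNormalCDF ((c k - δ l) / γ l)

/-- The one-step transition probability
`p_{kl}(θ) = Φ((c_{k+1} − δ_l)/γ_l) − Φ((c_k − δ_l)/γ_l)`. -/
noncomputable def cl1p (K : ℕ) (c δ γ : ℕ → ℝ) (k l : ℕ) : ℝ :=
  cl1G K c δ γ (k + 1) l - cl1G K c δ γ k l

/-- The normalized parameter set `Θ*`: increasing thresholds, positive volatilities,
`c₂ = 0` and `γ₁ = 1`. -/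
def cl1Valid (K : ℕ) (c δ γ : ℕ → ℝ) : Prop :=
  (∀ l, 1 ≤ l → l ≤ K → 0 < γ l) ∧
    (∀ k, 2 ≤ k → k < K → c k < c (k + 1)) ∧ c 2 = 0 ∧ γ 1 = 1

/-- The limiting composite log-likelihood
`L(θ) = Σ_l w_l Σ_k p_{kl}(θ₀) log p_{kl}(θ)`. -/
noncomputable def cl1L (K : ℕ) (w : ℕ → ℝ) (c₀ δ₀ γ₀ c δ γ : ℕ → ℝ) : ℝ :=
  ∑ l ∈ Finset.Icc 1 K, w l *
    ∑ k ∈ Finset.Icc 1 K, cl1p K c₀ δ₀ γ₀ k l * Real.log (cl1p K c δ γ k l)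

/-- The standard normal law charges every set of positive Lebesgue measure. -/
lemma gaussian_pos_of_volume_ne_zero {s : Set ℝ} (hs : volume s ≠ 0) :
    0 < ((gaussianReal 0 1) s).toReal := by
  refine ENNReal.toReal_pos (fun h => hs ?_) (measure_ne_top _ _)
  exact gaussianReal_absolutelyContinuous' 0 one_ne_zero h

lemma stdNormalCDF_strictMono : StrictMono stdNormalCDF := by
  intro a b hab
  have h : (gaussianReal 0 1).real (Set.Iic b) =
      (gaussianReal 0 1).real (Set.Iic a) + (gaussianReal 0 1).real (Set.Ioc a b) := by
    rw [← Set.Iic_union_Ioc_eq_Iic hab.le]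
    exact measureReal_union (Set.Iic_disjoint_Ioc le_rfl) measurableSet_Ioc
  have hpos : 0 < (gaussianReal 0 1).real (Set.Ioc a b) :=
    gaussian_pos_of_volume_ne_zero (by simp [hab])
  change (gaussianReal 0 1).real (Set.Iic a) < (gaussianReal 0 1).real (Set.Iic b)
  linarith

lemma stdNormalCDF_pos (x : ℝ) : 0 < stdNormalCDF x :=
  gaussian_pos_of_volume_ne_zero (by simp)

lemma stdNormalCDF_lt_one (x : ℝ) : stdNormalCDF x < 1 :=
  (stdNormalCDF_strictMono (lt_add_one x)).trans_le
    (measureReal_le_one (μ := gaussianReal 0 1) (s := Set.Iic (x + 1)))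

lemma cl1p_pos {K : ℕ} {c δ γ : ℕ → ℝ} (hK : 3 ≤ K) (h : cl1Valid K c δ γ) {k l : ℕ}
    (hk : 1 ≤ k) (hkK : k ≤ K) (hl : 1 ≤ l) (hlK : l ≤ K) : 0 < cl1p K c δ γ k l := by
  obtain ⟨hγ, hc, -, -⟩ := h
  have hk1 : ¬ (k + 1 ≤ 1) := by omega
  have hkK' : ¬ (K + 1 ≤ k) := by omega
  unfold cl1p cl1G
  rw [if_neg hk1, if_neg hkK']
  by_cases h1 : k ≤ 1
  · have h2 : ¬ (K + 1 ≤ k + 1) := by omega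
    rw [if_pos h1, if_neg h2, sub_zero]
    exact stdNormalCDF_pos _
  · rw [if_neg h1]
    by_cases h2 : K + 1 ≤ k + 1
    · rw [if_pos h2]
      exact sub_pos.2 (stdNormalCDF_lt_one _)
    · rw [if_neg h2]
      refine sub_pos.2 (stdNormalCDF_strictMono ?_)
      have := hc k (by omega) (by omega)
      have := hγ l hl hlK
      gcongr

lemma cl1p_sum {K : ℕ} (hK : 3 ≤ K) (c δ γ : ℕ → ℝ) (l : ℕ) :
    ∑ k ∈ Finset.Icc 1 K, cl1p K c δ γ k l = 1 := by
  have h : ∑ k ∈ Finset.Ico 1 (K + 1), cl1p K c δ γ k l =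
      cl1G K c δ γ (K + 1) l - cl1G K c δ γ 1 l :=
    Finset.sum_Ico_sub (fun k => cl1G K c δ γ k l) (by omega)
  have hI : Finset.Icc 1 K = Finset.Ico 1 (K + 1) := by ext; simp
  rw [hI, h]
  have hK0 : K ≠ 0 := by omega
  simp [cl1G, hK0]

/-- The termwise bound `p log q ≤ p log p + (q − p)` behind Gibbs' inequality; the correction
terms `q − p` cancel when summed over two probability vectors. -/
lemma gibbs_term {p q : ℝ} (hp : 0 < p) (hq : 0 < q) :
    p * Real.log q ≤ p * Real.log p + (q - p) := by
  have h := mul_le_mul_of_nonneg_left (Real.log_le_sub_one_of_pos (div_pos hq hp)) hp.le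
  rw [Real.log_div hq.ne' hp.ne', mul_sub, mul_sub, mul_div_cancel₀ _ hp.ne'] at h
  linarith

lemma gibbs_term_eq {p q : ℝ} (hp : 0 < p) (hq : 0 < q)
    (h : p * Real.log q = p * Real.log p + (q - p)) : q = p := by
  by_contra hne
  have hne' : q / p ≠ 1 := fun h1 => hne ((div_eq_one_iff_eq hp.ne').1 h1)
  have h' := mul_lt_mul_of_pos_left (Real.log_lt_sub_one_of_pos (div_pos hq hp) hne') hp
  rw [Real.log_div hq.ne' hp.ne', mul_sub, mul_sub, mul_div_cancel₀ _ hp.ne'] at h'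
  linarith

lemma gibbs_sum_correction {s : Finset ℕ} {p q : ℕ → ℝ}
    (hpq : ∑ k ∈ s, p k = ∑ k ∈ s, q k) :
    ∑ k ∈ s, (p k * Real.log (p k) + (q k - p k)) = ∑ k ∈ s, p k * Real.log (p k) := by
  rw [Finset.sum_add_distrib, Finset.sum_sub_distrib, hpq, sub_self, add_zero]

lemma gibbs_le {s : Finset ℕ} {p q : ℕ → ℝ} (hp : ∀ k ∈ s, 0 < p k) (hq : ∀ k ∈ s, 0 < q k)
    (hpq : ∑ k ∈ s, p k = ∑ k ∈ s, q k) :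
    ∑ k ∈ s, p k * Real.log (q k) ≤ ∑ k ∈ s, p k * Real.log (p k) := by
  rw [← gibbs_sum_correction hpq]
  exact Finset.sum_le_sum fun k hk => gibbs_term (hp k hk) (hq k hk)

lemma gibbs_eq {s : Finset ℕ} {p q : ℕ → ℝ} (hp : ∀ k ∈ s, 0 < p k) (hq : ∀ k ∈ s, 0 < q k)
    (hpq : ∑ k ∈ s, p k = ∑ k ∈ s, q k)
    (h : ∑ k ∈ s, p k * Real.log (q k) = ∑ k ∈ s, p k * Real.log (p k)) :
    ∀ k ∈ s, q k = p k := by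
  rw [← gibbs_sum_correction hpq,
    Finset.sum_eq_sum_iff_of_le fun k hk => gibbs_term (hp k hk) (hq k hk)] at h
  exact fun k hk => gibbs_term_eq (hp k hk) (hq k hk) (h k hk)

/-- Equal transition probabilities in a column have equal partial sums, so the standardized
thresholds of that column agree. -/
lemma standardized_eq {K : ℕ} {c δ γ c₀ δ₀ γ₀ : ℕ → ℝ} {l : ℕ}
    (h : ∀ k ∈ Finset.Icc 1 K, cl1p K c δ γ k l = cl1p K c₀ δ₀ γ₀ k l)
    {k : ℕ} (hk : 2 ≤ k) (hkK : k ≤ K) :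
    (c k - δ l) / γ l = (c₀ k - δ₀ l) / γ₀ l := by
  have hG : ∀ j, 1 ≤ j → j ≤ K → cl1G K c δ γ j l = cl1G K c₀ δ₀ γ₀ j l := by
    intro j hj
    induction j, hj using Nat.le_induction with
    | base => intro _; simp [cl1G]
    | succ j hj ih =>
      intro hjK
      have h1 := ih (by omega)
      have h2 := h j (Finset.mem_Icc.2 ⟨hj, by omega⟩)
      unfold cl1p at h2
      linarith
  have h1 := hG k (by omega) hkK
  have hk1 : ¬ (k ≤ 1) := by omega
  have hk2 : ¬ (K + 1 ≤ k) := by omega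
  unfold cl1G at h1
  rw [if_neg hk1, if_neg hk2, if_neg hk1, if_neg hk2] at h1
  exact stdNormalCDF_strictMono.injective h1

/-- Two distinct points determine the affine map `x ↦ (x − d) / g`. -/
lemma location_scale_eq {x y d g d₀ g₀ : ℝ} (hxy : x < y) (hg : 0 < g) (hg₀ : 0 < g₀)
    (hx : (x - d) / g = (x - d₀) / g₀) (hy : (y - d) / g = (y - d₀) / g₀) :
    d = d₀ ∧ g = g₀ := by
  rw [div_eq_div_iff hg.ne' hg₀.ne'] at hx hy
  have hgg : g = g₀ := by
    have : (y - x) * (g - g₀) = 0 := by linear_combination hx - hy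
    rcases mul_eq_zero.1 this with h | h <;> linarith
  subst hgg
  exact ⟨by linarith [mul_right_cancel₀ hg.ne' hx], rfl⟩

/-- The true parameter `θ₀` is the unique maximizer over the
normalized parameter set `Θ*` of the limiting CL(1) composite log-likelihood. -/
theorem cl1_pseudo_true_value
    (K : ℕ) (hK : 3 ≤ K)
    (w : ℕ → ℝ) (hw : ∀ l, 1 ≤ l → l ≤ K → 0 < w l)
    (c₀ δ₀ γ₀ : ℕ → ℝ) (hθ₀ : cl1Valid K c₀ δ₀ γ₀)
    (c δ γ : ℕ → ℝ) (hθ : cl1Valid K c δ γ) :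
    cl1L K w c₀ δ₀ γ₀ c δ γ ≤ cl1L K w c₀ δ₀ γ₀ c₀ δ₀ γ₀ ∧
      (cl1L K w c₀ δ₀ γ₀ c δ γ = cl1L K w c₀ δ₀ γ₀ c₀ δ₀ γ₀ →
        (∀ k, 2 ≤ k → k ≤ K → c k = c₀ k) ∧
          (∀ l, 1 ≤ l → l ≤ K → δ l = δ₀ l) ∧
          (∀ l, 1 ≤ l → l ≤ K → γ l = γ₀ l)) := by
  have hp : ∀ l ∈ Finset.Icc 1 K, ∀ k ∈ Finset.Icc 1 K, 0 < cl1p K c₀ δ₀ γ₀ k l := by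
    intro l hl k hk
    rw [Finset.mem_Icc] at hl hk
    exact cl1p_pos hK hθ₀ hk.1 hk.2 hl.1 hl.2
  have hq : ∀ l ∈ Finset.Icc 1 K, ∀ k ∈ Finset.Icc 1 K, 0 < cl1p K c δ γ k l := by
    intro l hl k hk
    rw [Finset.mem_Icc] at hl hk
    exact cl1p_pos hK hθ hk.1 hk.2 hl.1 hl.2
  have hpq : ∀ l, ∑ k ∈ Finset.Icc 1 K, cl1p K c₀ δ₀ γ₀ k l =
      ∑ k ∈ Finset.Icc 1 K, cl1p K c δ γ k l := fun l => by
    rw [cl1p_sum hK, cl1p_sum hK]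
  have hw' : ∀ l ∈ Finset.Icc 1 K, 0 < w l := fun l hl =>
    hw l (Finset.mem_Icc.1 hl).1 (Finset.mem_Icc.1 hl).2
  have hcol := fun l (hl : l ∈ Finset.Icc 1 K) =>
    mul_le_mul_of_nonneg_left (gibbs_le (hp l hl) (hq l hl) (hpq l)) (hw' l hl).le
  refine ⟨Finset.sum_le_sum hcol, fun h => ?_⟩
  unfold cl1L at h
  rw [Finset.sum_eq_sum_iff_of_le hcol] at h
  have hstd : ∀ l, 1 ≤ l → l ≤ K → ∀ k, 2 ≤ k → k ≤ K →
      (c k - δ l) / γ l = (c₀ k - δ₀ l) / γ₀ l := by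
    intro l hl hlK k hk hkK
    have hmem : l ∈ Finset.Icc 1 K := Finset.mem_Icc.2 ⟨hl, hlK⟩
    exact standardized_eq (gibbs_eq (hp l hmem) (hq l hmem) (hpq l)
      (mul_left_cancel₀ (hw' l hmem).ne' (h l hmem))) hk hkK
  obtain ⟨hγ, hc, hc2, hγ1⟩ := hθ
  obtain ⟨hγ₀, -, hc2₀, hγ1₀⟩ := hθ₀
  have hδ1 : δ 1 = δ₀ 1 := by
    have h2 := hstd 1 le_rfl (by omega) 2 le_rfl (by omega)
    rw [hγ1, hγ1₀, hc2, hc2₀] at h2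
    linarith
  have hcc : ∀ k, 2 ≤ k → k ≤ K → c k = c₀ k := by
    intro k hk hkK
    have h2 := hstd 1 le_rfl (by omega) k hk hkK
    rw [hγ1, hγ1₀, hδ1] at h2
    linarith
  have hls : ∀ l, 1 ≤ l → l ≤ K → δ l = δ₀ l ∧ γ l = γ₀ l := by
    intro l hl hlK
    have h2 := hstd l hl hlK 2 le_rfl (by omega)
    have h3 := hstd l hl hlK 3 (by omega) hK
    rw [← hcc 2 le_rfl (by omega)] at h2
    rw [← hcc 3 (by omega) hK] at h3
    exact location_scale_eq (hc 2 le_rfl (by omega)) (hγ l hl hlK) (hγ₀ l hl hlK) h2 h3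
  exact ⟨hcc, fun l hl hlK => (hls l hl hlK).1, fun l hl hlK => (hls l hl hlK).2⟩
end
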